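/- arXiv:1305.7212 — 3 statements merged into one kernel-verified Lean document; each statement's English description precedes it below -/
import Mathlib

section
/- If a finitely additive measure μ on the positive integers is 𝒢-invariant, i.e., μ(πA) = μ(A) for every A ⊆ ℕ and every permutation π in the Lévy group 𝒢, then μ is a density measure. -/
open Filter Topology

/-- The counting function `A(n) = |A ∩ [1, n]|`, as a real number. -/
noncomputable def count (A : Set ℕ) (n : ℕ) : ℝ :=
  ((A ∩ Set.Icc 1 n).ncard : ℝ)

/-- `A ⊆ ℕ` has asymptotic density `a`, i.e. `A(n)/n → a`. -/
def HasDensity (A : Set ℕ) (a : ℝ) : Prop :=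
  Filter.Tendsto (fun n : ℕ => count A n / n) Filter.atTop (nhds a)

/-- Membership of a permutation `π` of `ℕ` in the Lévy group `𝒢`:
`|{k : k ≤ n < π(k)}| / n → 0`. -/
def InLevyGroup (π : Equiv.Perm ℕ) : Prop :=
  Filter.Tendsto
    (fun n : ℕ => (({k : ℕ | k ≤ n ∧ n < π k}.ncard : ℝ) / n))
    Filter.atTop (nhds 0)

/-- A finitely additive probability measure defined on all subsets of `ℕ`,
with values in `[0, 1]`. -/
def IsFAMeasure (μ : Set ℕ → ℝ) : Prop :=
  (∀ A : Set ℕ, 0 ≤ μ A) ∧ (∀ A : Set ℕ, μ A ≤ 1) ∧ μ Set.univ = 1 ∧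
    ∀ A B : Set ℕ, Disjoint A B → μ (A ∪ B) = μ A + μ B

/-- A density measure: a finitely additive measure extending asymptotic density. -/
def IsDensityMeasure (μ : Set ℕ → ℝ) : Prop :=
  IsFAMeasure μ ∧ ∀ (A : Set ℕ) (a : ℝ), HasDensity A a → μ A = a

/-- Statistical convergence of a real sequence `x` to `L`: for every `ε > 0`
the set `{n : |x n − L| ≥ ε}` has asymptotic density zero. -/
def StatTendsto (x : ℕ → ℝ) (L : ℝ) : Prop :=
  ∀ ε : ℝ, 0 < ε → HasDensity {n : ℕ | ε ≤ |x n - L|} 0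

/-- The limit of a (bounded) real sequence along an ultrafilter on `ℕ`. -/
noncomputable def ulim (𝒰 : Ultrafilter ℕ) (x : ℕ → ℝ) : ℝ :=
  limUnder (𝒰 : Filter ℕ) x

open Classical in
/-- The number of elements of `A` below `n`. -/
noncomputable def natCount (A : Set ℕ) (n : ℕ) : ℕ := Nat.count (· ∈ A) n

open Classical in
theorem natCount_succ (A : Set ℕ) (n : ℕ) :
    natCount A (n + 1) = natCount A n + if n ∈ A then 1 else 0 :=
  Nat.count_succ _ _

theorem natCount_nth {A : Set ℕ} (hA : A.Infinite) (n : ℕ) :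
    natCount A (Nat.nth (· ∈ A) n) = n := by
  classical
  exact Nat.count_nth_of_infinite (p := (· ∈ A)) hA n

theorem nth_natCount {A : Set ℕ} {k : ℕ} (hk : k ∈ A) : Nat.nth (· ∈ A) (natCount A k) = k := by
  classical
  exact Nat.nth_count (p := (· ∈ A)) hk

open Classical in
/-- The counting function of `A` is `natCount A` up to an error of at most `1`. -/
theorem abs_count_sub_natCount_le (A : Set ℕ) (n : ℕ) :
    |count A n - (natCount A n : ℝ)| ≤ 1 := by
  have h1 : count A n + (if 0 ∈ A then 1 else 0) = (natCount A (n + 1) : ℝ) := by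
    have h2 : A ∩ Set.Icc 1 n = ((Finset.range n).filter (fun k => k + 1 ∈ A)).map
        ⟨Nat.succ, Nat.succ_injective⟩ := by
      ext x
      simp only [Set.mem_inter_iff, Set.mem_Icc, Finset.coe_map, Function.Embedding.coeFn_mk,
        Set.mem_image, Finset.mem_coe, Finset.mem_filter, Finset.mem_range]
      constructor
      · rintro ⟨hx, h1, h2⟩
        refine ⟨x - 1, ⟨by omega, ?_⟩, by omega⟩
        rwa [Nat.sub_add_cancel h1]
      · rintro ⟨y, ⟨hy, hA⟩, rfl⟩
        exact ⟨hA, by omega, by omega⟩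
    rw [natCount, Nat.count_succ', count, h2, Set.ncard_coe_finset, Finset.card_map,
      Nat.count_eq_card_filter_range]
    push_cast
    rfl
  have h3 : (natCount A (n + 1) : ℝ)
      = natCount A n + (if n ∈ A then 1 else 0) := by
    rw [natCount_succ]; push_cast; rfl
  rw [abs_le]
  split_ifs at h1 h3 <;> constructor <;> linarith

/-- Sequences at bounded distance have the same averages in the limit. -/
theorem tendsto_div_of_abs_sub_le {u v : ℕ → ℝ} {a C : ℝ} (h : ∀ n, |u n - v n| ≤ C)
    (hv : Tendsto (fun n : ℕ => v n / n) atTop (𝓝 a)) :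
    Tendsto (fun n : ℕ => u n / n) atTop (𝓝 a) := by
  have h0 : Tendsto (fun n : ℕ => (u n - v n) / n) atTop (𝓝 0) := by
    refine squeeze_zero_norm (fun n => ?_) (tendsto_const_div_atTop_nhds_zero_nat C)
    rw [norm_div, Real.norm_eq_abs, Real.norm_natCast]
    exact div_le_div_of_nonneg_right (h n) (Nat.cast_nonneg n)
  simpa [← add_div] using h0.add hv

theorem hasDensity_iff_tendsto_natCount {A : Set ℕ} {a : ℝ} :
    HasDensity A a ↔ Tendsto (fun n : ℕ => (natCount A n : ℝ) / n) atTop (𝓝 a) :=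
  ⟨tendsto_div_of_abs_sub_le (C := 1) fun n => by
      rw [abs_sub_comm]; exact abs_count_sub_natCount_le A n,
    tendsto_div_of_abs_sub_le (abs_count_sub_natCount_le A)⟩

theorem natCount_add_natCount_compl (A : Set ℕ) (n : ℕ) :
    natCount A n + natCount Aᶜ n = n := by
  induction n with
  | zero => simp [natCount]
  | succ n ih =>
    rw [natCount_succ, natCount_succ]
    by_cases h : n ∈ A <;> simp [h] <;> omega

theorem HasDensity.compl {A : Set ℕ} {a : ℝ} (h : HasDensity A a) : HasDensity Aᶜ (1 - a) := by
  classical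
  rw [hasDensity_iff_tendsto_natCount] at h ⊢
  refine (h.const_sub 1).congr' ?_
  filter_upwards [eventually_gt_atTop 0] with n hn
  have hn' : (n : ℝ) ≠ 0 := by positivity
  have : (natCount A n : ℝ) + natCount Aᶜ n = n :=
    mod_cast natCount_add_natCount_compl A n
  field_simp
  linarith

theorem HasDensity.infinite {A : Set ℕ} {a : ℝ} (h : HasDensity A a) (ha : 0 < a) :
    A.Infinite := by
  intro hfin
  have h0 : HasDensity A 0 := by
    refine squeeze_zero (fun n => by unfold count; positivity) (fun n => ?_)
      (tendsto_const_div_atTop_nhds_zero_nat (A.ncard : ℝ))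
    exact div_le_div_of_nonneg_right
      (Nat.cast_le.2 (Set.ncard_le_ncard Set.inter_subset_left hfin)) (Nat.cast_nonneg n)
  exact ha.ne (tendsto_nhds_unique h0 h)

open Classical in
/-- The map sending the `i`-th element of `A` to the `i`-th element of `B`, and likewise for the
complements. -/
noncomputable def matchFun (A B : Set ℕ) (k : ℕ) : ℕ :=
  if k ∈ A then Nat.nth (· ∈ B) (natCount A k)
  else Nat.nth (· ∈ Bᶜ) (natCount Aᶜ k)

theorem matchFun_mem_iff {A B : Set ℕ} (hB : B.Infinite) (hB' : Bᶜ.Infinite) (k : ℕ) :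
    matchFun A B k ∈ B ↔ k ∈ A := by
  classical
  by_cases h : k ∈ A
  · simpa [matchFun, h] using Nat.nth_mem_of_infinite (p := (· ∈ B)) hB (natCount A k)
  · simpa [matchFun, h] using Nat.nth_mem_of_infinite (p := (· ∈ Bᶜ)) hB' (natCount Aᶜ k)

theorem matchFun_matchFun {A B : Set ℕ} (hB : B.Infinite) (hB' : Bᶜ.Infinite) (k : ℕ) :
    matchFun B A (matchFun A B k) = k := by
  classical
  have hmem := matchFun_mem_iff (A := A) hB hB' k
  rw [matchFun]
  by_cases h : k ∈ A
  · rw [if_pos (hmem.2 h), matchFun, if_pos h, natCount_nth hB, nth_natCount h]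
  · rw [if_neg (fun hk => h (hmem.1 hk)), matchFun, if_neg h, natCount_nth hB', nth_natCount h]

/-- The permutation matching `A` with `B` and `Aᶜ` with `Bᶜ` increasingly. -/
noncomputable def matchPerm {A B : Set ℕ} (hA : A.Infinite) (hA' : Aᶜ.Infinite)
    (hB : B.Infinite) (hB' : Bᶜ.Infinite) : Equiv.Perm ℕ where
  toFun := matchFun A B
  invFun := matchFun B A
  left_inv := matchFun_matchFun hB hB'
  right_inv := matchFun_matchFun hA hA'

theorem matchPerm_image {A B : Set ℕ} (hA : A.Infinite) (hA' : Aᶜ.Infinite)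
    (hB : B.Infinite) (hB' : Bᶜ.Infinite) : matchPerm hA hA' hB hB' '' A = B := by
  ext x
  rw [Equiv.image_eq_preimage_symm]
  exact matchFun_mem_iff hA hA' x

theorem ncard_le_natCount_sub (A B : Set ℕ) (n : ℕ) :
    {k | k ∈ A ∧ k ≤ n ∧ n < Nat.nth (· ∈ B) (natCount A k)}.ncard ≤
      natCount A (n + 1) - natCount B (n + 1) := by
  classical
  rw [← Nat.card_Ico, ← Set.ncard_coe_finset]
  refine Set.ncard_le_ncard_of_injOn (natCount A) ?_ ?_ (Finset.finite_toSet _)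
  · rintro k ⟨hk, hkn, hn⟩
    simp only [Finset.coe_Ico, Set.mem_Ico]
    refine ⟨?_, Nat.count_strict_mono (p := (· ∈ A)) hk (by omega)⟩
    by_contra! hlt
    exact absurd (Nat.nth_lt_of_lt_count hlt) (by omega)
  · rintro k ⟨hk, -⟩ l ⟨hl, -⟩ hkl
    exact Nat.count_injective (p := (· ∈ A)) hk hl hkl

theorem inLevyGroup_matchPerm {A B : Set ℕ} {a : ℝ} (hA : A.Infinite) (hA' : Aᶜ.Infinite)
    (hB : B.Infinite) (hB' : Bᶜ.Infinite) (hAa : HasDensity A a) (hBa : HasDensity B a) :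
    InLevyGroup (matchPerm hA hA' hB hB') := by
  classical
  rw [hasDensity_iff_tendsto_natCount] at hAa hBa
  have hlim : Tendsto (fun n : ℕ =>
      |((natCount A (n + 1) : ℝ) - natCount B (n + 1))| / n) atTop (𝓝 0) := by
    have h := (hAa.sub hBa).abs
    rw [sub_self, abs_zero] at h
    refine tendsto_div_of_abs_sub_le
      (v := fun n => |((natCount A n : ℝ) - natCount B n)|) (C := 1) (fun n => ?_)
      (h.congr fun n => ?_)
    · refine (abs_abs_sub_abs_le_abs_sub _ _).trans ?_
      rw [natCount_succ, natCount_succ, abs_le]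
      split_ifs <;> constructor <;> push_cast <;> linarith
    · rw [← sub_div, abs_div, Nat.abs_cast]
  refine squeeze_zero (fun n => by positivity) (fun n => ?_) hlim
  refine div_le_div_of_nonneg_right ?_ (Nat.cast_nonneg n)
  have hsub : {k | k ≤ n ∧ n < matchPerm hA hA' hB hB' k} ⊆
      {k | k ∈ A ∧ k ≤ n ∧ n < Nat.nth (· ∈ B) (natCount A k)} ∪
      {k | k ∈ Aᶜ ∧ k ≤ n ∧ n < Nat.nth (· ∈ Bᶜ) (natCount Aᶜ k)} := by
    rintro k ⟨hk, hn⟩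
    change n < matchFun A B k at hn
    rw [matchFun] at hn
    split_ifs at hn with h
    · exact Or.inl ⟨h, hk, hn⟩
    · exact Or.inr ⟨h, hk, hn⟩
  have hfin : ({k | k ∈ A ∧ k ≤ n ∧ n < Nat.nth (· ∈ B) (natCount A k)} ∪
      {k | k ∈ Aᶜ ∧ k ≤ n ∧ n < Nat.nth (· ∈ Bᶜ) (natCount Aᶜ k)}).Finite :=
    (Set.finite_Iic n).subset (by rintro k (h | h) <;> exact h.2.1)
  have hcard := ((Set.ncard_le_ncard hsub hfin).trans (Set.ncard_union_le _ _)).trans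
    (add_le_add (ncard_le_natCount_sub A B n) (ncard_le_natCount_sub Aᶜ Bᶜ n))
  have hcA := natCount_add_natCount_compl A (n + 1)
  have hcB := natCount_add_natCount_compl B (n + 1)
  rcases le_total (natCount A (n + 1)) (natCount B (n + 1)) with h | h
  · refine le_trans ?_ (neg_le_abs _)
    rw [neg_sub, ← Nat.cast_sub h, Nat.cast_le]
    omega
  · refine le_trans ?_ (le_abs_self _)
    rw [← Nat.cast_sub h, Nat.cast_le]
    omega

/-- A Lévy-invariant set function takes equal values on sets of equal density in `(0, 1)`. -/
theorem eq_of_hasDensity_of_levyGroup_invariant {μ : Set ℕ → ℝ}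
    (hinv : ∀ (A : Set ℕ) (π : Equiv.Perm ℕ), InLevyGroup π → μ (π '' A) = μ A)
    {A B : Set ℕ} {a : ℝ} (h0 : 0 < a) (h1 : a < 1) (hA : HasDensity A a)
    (hB : HasDensity B a) : μ A = μ B := by
  have hA' := hA.compl.infinite (sub_pos.2 h1)
  have hB' := hB.compl.infinite (sub_pos.2 h1)
  rw [← hinv A _ (inLevyGroup_matchPerm (hA.infinite h0) hA' (hB.infinite h0) hB' hA hB),
    matchPerm_image]

/-- Every set of density `a` contains a set of density `θ * a`, for `θ ∈ [0, 1]`. -/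
theorem HasDensity.exists_subset {A : Set ℕ} {a θ : ℝ} (hA : HasDensity A a) (h0 : 0 ≤ θ)
    (h1 : θ ≤ 1) : ∃ B ⊆ A, HasDensity B (θ * a) := by
  classical
  set c : ℕ → ℕ := natCount A with hc
  refine ⟨{k | k ∈ A ∧ ⌊θ * c k⌋₊ < ⌊θ * (c k + 1)⌋₊}, fun k hk => hk.1, ?_⟩
  set B : Set ℕ := {k | k ∈ A ∧ ⌊θ * c k⌋₊ < ⌊θ * (c k + 1)⌋₊} with hB
  have hcount : ∀ n, natCount B n = ⌊θ * c n⌋₊ := by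
    intro n
    induction n with
    | zero => simp [hc, natCount]
    | succ n ih =>
      have hup : ⌊θ * (c n + 1)⌋₊ ≤ ⌊θ * c n⌋₊ + 1 := by
        rw [← Nat.floor_add_one (by positivity)]
        exact Nat.floor_le_floor (by linarith)
      have hlow : ⌊θ * c n⌋₊ ≤ ⌊θ * (c n + 1)⌋₊ := Nat.floor_le_floor (by linarith)
      have hcs : c (n + 1) = c n + if n ∈ A then 1 else 0 := natCount_succ _ _
      rw [natCount_succ, ih, hcs]
      by_cases hn : n ∈ A
      · by_cases hlt : ⌊θ * c n⌋₊ < ⌊θ * (c n + 1)⌋₊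
        · have hnB : n ∈ B := ⟨hn, hlt⟩
          rw [if_pos hnB, if_pos hn]
          push_cast
          omega
        · have hnB : n ∉ B := fun h => hlt h.2
          rw [if_neg hnB, if_pos hn]
          push_cast
          omega
      · have hnB : n ∉ B := fun h => hn h.1
        simp [hnB, hn]
  rw [hasDensity_iff_tendsto_natCount] at hA ⊢
  refine tendsto_div_of_abs_sub_le (v := fun n => θ * c n) (C := 1) (fun n => ?_)
    ((hA.const_mul θ).congr fun n => (mul_div_assoc _ _ _).symm)
  rw [hcount, abs_le]
  have h2 := Nat.floor_le (a := θ * c n) (by positivity)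
  have h3 := Nat.lt_floor_add_one (θ * c n)
  constructor <;> linarith

theorem hasDensity_mod_eq {m i : ℕ} (hi : i < m) : HasDensity {k | k % m = i} (1 / m) := by
  classical
  have hm : (0 : ℝ) < m := by exact_mod_cast (Nat.zero_le i).trans_lt hi
  rw [hasDensity_iff_tendsto_natCount]
  refine tendsto_div_of_abs_sub_le (v := fun n => (n : ℝ) / m) (C := 1) (fun n => ?_) ?_
  · have hset : natCount {k | k % m = i} n = n.count (· ≡ i [MOD m]) := by
      unfold natCount
      congr! 2 with k
      simp [Nat.ModEq, Nat.mod_eq_of_lt hi]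
    rw [hset, Nat.count_modEq_card n ((Nat.zero_le i).trans_lt hi) i]
    have h1 : (n : ℝ) / m - 1 < (n / m : ℕ) := by
      rw [← Nat.floor_div_eq_div (K := ℝ)]
      linarith [Nat.lt_floor_add_one ((n : ℝ) / m)]
    have h2 : ((n / m : ℕ) : ℝ) ≤ (n : ℝ) / m := Nat.cast_div_le
    rw [abs_le]
    split_ifs <;> constructor <;> push_cast <;> linarith
  · refine tendsto_const_nhds.congr' ?_
    filter_upwards [eventually_gt_atTop 0] with n hn
    have hn' : (n : ℝ) ≠ 0 := by positivity
    field_simp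

theorem IsFAMeasure.mono {μ : Set ℕ → ℝ} (hμ : IsFAMeasure μ) {A B : Set ℕ} (h : A ⊆ B) :
    μ A ≤ μ B := by
  have := hμ.2.2.2 A (B \ A) Set.disjoint_sdiff_right
  rw [Set.union_sdiff_cancel h] at this
  linarith [hμ.1 (B \ A)]

theorem setOf_mod_lt_succ (m j : ℕ) :
    {k | k % m < j + 1} = {k | k % m < j} ∪ {k | k % m = j} := by
  ext k
  exact Nat.lt_succ_iff_lt_or_eq

theorem disjoint_setOf_mod (m j : ℕ) : Disjoint {k | k % m < j} {k | k % m = j} :=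
  Set.disjoint_left.2 fun _ hlt heq => hlt.ne heq

theorem HasDensity.union {A B : Set ℕ} {a b : ℝ} (hA : HasDensity A a) (hB : HasDensity B b)
    (hAB : Disjoint A B) : HasDensity (A ∪ B) (a + b) := by
  refine (Tendsto.add hA hB).congr fun n => ?_
  rw [← add_div, count, count, count, Set.union_inter_distrib_right,
    Set.ncard_union_eq (hAB.mono Set.inter_subset_left Set.inter_subset_left)
      ((Set.finite_Icc 1 n).inter_of_right A) ((Set.finite_Icc 1 n).inter_of_right B), Nat.cast_add]

theorem hasDensity_mod_lt {m j : ℕ} (hj : j ≤ m) : HasDensity {k | k % m < j} (j / m) := by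
  induction j with
  | zero => simp [HasDensity, count]
  | succ j ih =>
    rw [setOf_mod_lt_succ, Nat.cast_succ, add_div]
    exact (ih (by omega)).union (hasDensity_mod_eq hj) (disjoint_setOf_mod m j)

/-- A Lévy-invariant measure gives `{k | k % m < j}` its density `j / m`. -/
theorem IsFAMeasure.apply_mod_lt {μ : Set ℕ → ℝ} (hμ : IsFAMeasure μ)
    (hinv : ∀ (A : Set ℕ) (π : Equiv.Perm ℕ), InLevyGroup π → μ (π '' A) = μ A)
    {j m : ℕ} (hm : 2 ≤ m) (hj : j ≤ m) : μ {k | k % m < j} = j / m := by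
  have hm' : (2 : ℝ) ≤ m := by exact_mod_cast hm
  have hmul : ∀ i ≤ m, μ {k | k % m < i} = i * μ {k | k % m = 0} := by
    intro i hi
    induction i with
    | zero =>
      have := hμ.2.2.2 ∅ ∅ (Set.disjoint_empty _)
      simpa using this
    | succ i ih =>
      have hi' : μ {k | k % m = i} = μ {k | k % m = 0} :=
        eq_of_hasDensity_of_levyGroup_invariant hinv (by positivity)
          ((div_lt_one (by linarith)).2 (by linarith)) (hasDensity_mod_eq hi)
          (hasDensity_mod_eq (by omega))
      rw [setOf_mod_lt_succ, hμ.2.2.2 _ _ (disjoint_setOf_mod m i), ih (by omega), hi']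
      push_cast
      ring
  have huniv : {k | k % m < m} = Set.univ := Set.eq_univ_of_forall fun k => Nat.mod_lt k (by omega)
  have hone := hmul m le_rfl
  rw [huniv, hμ.2.2.1] at hone
  rw [hmul j hj, eq_div_iff (by positivity), mul_assoc, mul_comm (μ _), ← hone, mul_one]

/-- A Lévy-invariant measure is bounded below by the density. -/
theorem IsFAMeasure.le_of_hasDensity {μ : Set ℕ → ℝ} (hμ : IsFAMeasure μ)
    (hinv : ∀ (A : Set ℕ) (π : Equiv.Perm ℕ), InLevyGroup π → μ (π '' A) = μ A)
    {A : Set ℕ} {a : ℝ} (hA : HasDensity A a) : a ≤ μ A := by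
  by_contra! hlt
  obtain ⟨q, hq, hqa⟩ := exists_rat_btwn hlt
  have hq0 : (0 : ℝ) < q := (hμ.1 A).trans_lt hq
  have ha1 : a ≤ 1 := by
    refine le_of_tendsto' hA fun n => div_le_one_of_le₀ ?_ (Nat.cast_nonneg n)
    refine Nat.cast_le.2 ((Set.ncard_le_ncard Set.inter_subset_right (Set.finite_Icc 1 n)).trans ?_)
    simp [Set.ncard_eq_toFinset_card']
  have hq1 : (q : ℝ) < 1 := hqa.trans_le ha1
  have ha0 : 0 < a := hq0.trans hqa
  obtain ⟨j, m, hm, hjm, hqe⟩ : ∃ j m : ℕ, 2 ≤ m ∧ j ≤ m ∧ (q : ℝ) = j / m := by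
    have hnum : ((q.num.toNat : ℤ)) = q.num :=
      Int.toNat_of_nonneg (Rat.num_nonneg.2 (by exact_mod_cast hq0.le))
    have hpos : 0 < q.num := Rat.num_pos.2 (by exact_mod_cast hq0)
    have hltd : q.num < q.den := Rat.num_lt_denom_iff.2 (by exact_mod_cast hq1)
    refine ⟨q.num.toNat, q.den, by omega, by omega, ?_⟩
    rw [← Int.cast_natCast (q.num.toNat), hnum]
    exact Rat.cast_def q
  obtain ⟨B, hBA, hB⟩ := hA.exists_subset (θ := q / a) (by positivity) ((div_le_one ha0).2 hqa.le)
  rw [div_mul_cancel₀ _ ha0.ne'] at hB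
  have hBq : μ B = q := by
    rw [eq_of_hasDensity_of_levyGroup_invariant hinv hq0 hq1 hB
      (hqe ▸ hasDensity_mod_lt hjm : HasDensity {k | k % m < j} q),
      hμ.apply_mod_lt hinv hm hjm, hqe]
  linarith [hμ.mono hBA]

/-- If a finitely additive measure `μ` on `ℕ` is invariant under the Lévy
group, then it is a density measure. -/
theorem isDensityMeasure_of_levyGroup_invariant
    (μ : Set ℕ → ℝ) (hμ : IsFAMeasure μ)
    (hinv : ∀ (A : Set ℕ) (π : Equiv.Perm ℕ), InLevyGroup π → μ (π '' A) = μ A) :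
    IsDensityMeasure μ := by
  refine ⟨hμ, fun A a hA => le_antisymm ?_ (hμ.le_of_hasDensity hinv hA)⟩
  have h1 := hμ.le_of_hasDensity hinv hA.compl
  have h2 := hμ.2.2.2 A Aᶜ disjoint_compl_right
  rw [Set.union_compl_self, hμ.2.2.1] at h2
  linarith
end

section
/- If π is a permutation of the positive integers such that every density measure μ satisfies μ(πA) = μ(A) for every A ⊆ ℕ, then π belongs to the Lévy group 𝒢. -/
open Filter Topology

theorem ncard_Icc_one (n : ℕ) : (Set.Icc 1 n).ncard = n := by
  rw [← Finset.coe_Icc, Set.ncard_coe_finset, Nat.card_Icc, Nat.add_sub_cancel]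

theorem ncard_Iic_nat (n : ℕ) : (Set.Iic n).ncard = n + 1 := by
  rw [← Finset.coe_Iic, Set.ncard_coe_finset, Nat.card_Iic]

theorem count_div_mem_Icc (A : Set ℕ) (n : ℕ) : count A n / n ∈ Set.Icc (0 : ℝ) 1 := by
  refine ⟨by unfold count; positivity, div_le_one_of_le₀ ?_ n.cast_nonneg⟩
  have h := Set.ncard_le_ncard (Set.inter_subset_right (s := A) (t := Set.Icc 1 n))
    (Set.finite_Icc 1 n)
  exact Nat.cast_le.mpr (h.trans_eq (ncard_Icc_one n))

theorem tendsto_ulim_count_div (𝒰 : Ultrafilter ℕ) (A : Set ℕ) :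
    Tendsto (fun n : ℕ => count A n / n) 𝒰 (𝓝 (ulim 𝒰 fun n => count A n / n)) := by
  apply tendsto_nhds_limUnder
  obtain ⟨x, -, hx⟩ := (isCompact_Icc (a := (0 : ℝ)) (b := 1)).ultrafilter_le_nhds
    (𝒰.map fun n : ℕ => count A n / n)
    (le_principal_iff.2 (mem_map.2 (Eventually.of_forall (count_div_mem_Icc A))))
  exact ⟨x, hx⟩

theorem count_union {A B : Set ℕ} (hAB : Disjoint A B) (n : ℕ) :
    count (A ∪ B) n = count A n + count B n := by
  unfold count
  rw [Set.union_inter_distrib_right, Set.ncard_union_eq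
    (hAB.mono Set.inter_subset_left Set.inter_subset_left)
    ((Set.finite_Icc 1 n).inter_of_right A) ((Set.finite_Icc 1 n).inter_of_right B)]
  push_cast
  rfl

/-- The limit of the relative counting function along a free ultrafilter is a density measure. -/
theorem isDensityMeasure_ulim (𝒰 : Ultrafilter ℕ) (h𝒰 : (𝒰 : Filter ℕ) ≤ atTop) :
    IsDensityMeasure fun A => ulim 𝒰 fun n => count A n / n := by
  have hlim := tendsto_ulim_count_div 𝒰
  refine ⟨⟨fun A => ?_, fun A => ?_, ?_, fun A B hAB => ?_⟩, fun A a ha => ?_⟩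
  · exact ge_of_tendsto' (hlim A) fun n => (count_div_mem_Icc A n).1
  · exact le_of_tendsto' (hlim A) fun n => (count_div_mem_Icc A n).2
  · refine tendsto_nhds_unique_of_eventuallyEq (hlim Set.univ) tendsto_const_nhds ?_
    filter_upwards [h𝒰 (eventually_gt_atTop 0)] with n hn
    have hn' : (n : ℝ) ≠ 0 := by exact_mod_cast (ne_of_gt hn)
    rw [count, Set.univ_inter, ncard_Icc_one, div_self hn']
  · refine tendsto_nhds_unique (hlim (A ∪ B)) (((hlim A).add (hlim B)).congr fun n => ?_)
    rw [count_union hAB, add_div]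
  · exact tendsto_nhds_unique (hlim A) (ha.mono_left h𝒰)

/-- Any cofinal set of natural numbers contains a sequence growing at least quadratically. -/
theorem exists_seq_sq_le_of_frequently {p : ℕ → Prop} (hp : ∃ᶠ n in atTop, p n) :
    ∃ u : ℕ → ℕ, (∀ i, p (u (i + 1))) ∧ ∀ i, (u i + 1) ^ 2 ≤ u (i + 1) := by
  choose g hg hpg using frequently_atTop.1 hp
  let u : ℕ → ℕ := fun i => i.rec 0 fun _ m => g ((m + 1) ^ 2)
  exact ⟨u, fun i => hpg _, fun i => hg _⟩

/-- If every density measure is invariant under a permutation `π`, then `π`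
belongs to the Lévy group. -/
theorem inLevyGroup_of_all_densityMeasures_invariant
    (π : Equiv.Perm ℕ)
    (h : ∀ μ : Set ℕ → ℝ, IsDensityMeasure μ → ∀ A : Set ℕ, μ (π '' A) = μ A) :
    InLevyGroup π := by
  by_contra hπ
  obtain ⟨ε, hε, hfreq⟩ : ∃ ε : ℝ, 0 < ε ∧
      ∃ᶠ n : ℕ in atTop, ε ≤ ({k : ℕ | k ≤ n ∧ n < π k}.ncard : ℝ) / n := by
    by_contra! hcon
    refine hπ (tendsto_order.2 ⟨fun a ha => Eventually.of_forall fun n => ?_, fun ε hε => ?_⟩)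
    · exact ha.trans_le (by positivity)
    · simpa using hcon ε hε
  obtain ⟨u, hu, hsq⟩ := exists_seq_sq_le_of_frequently hfreq
  have hmono : StrictMono u := strictMono_nat_of_lt_succ fun i => by nlinarith [hsq i]
  have hshift : Tendsto (fun i => u (i + 1)) atTop atTop :=
    hmono.tendsto_atTop.comp (tendsto_add_atTop_nat 1)
  have hratio : Tendsto (fun i => ((u i + 1 : ℕ) : ℝ) / (u (i + 1) : ℕ)) atTop (𝓝 0) := by
    have hinv : Tendsto (fun i => 1 / ((u i : ℝ) + 1)) atTop (𝓝 0) :=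
      tendsto_one_div_add_atTop_nhds_zero_nat.comp hmono.tendsto_atTop
    refine squeeze_zero (fun i => by positivity) (fun i => ?_) hinv
    have hi : ((u i : ℝ) + 1) ^ 2 ≤ u (i + 1) := by exact_mod_cast hsq i
    have hpos : (0 : ℝ) < (u i : ℝ) + 1 := by positivity
    rw [div_le_div_iff₀ (lt_of_lt_of_le (by positivity) hi) hpos]
    push_cast
    linarith
  let A : Set ℕ := {k | ∃ i, u i < k ∧ k ≤ u (i + 1) ∧ u (i + 1) < π k}
  have hlower (i : ℕ) :
      ε - ((u i + 1 : ℕ) : ℝ) / (u (i + 1) : ℕ) ≤ count A (u (i + 1)) / (u (i + 1) : ℕ) := by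
    have hsub : {k : ℕ | k ≤ u (i + 1) ∧ u (i + 1) < π k} ⊆
        (A ∩ Set.Icc 1 (u (i + 1))) ∪ Set.Iic (u i) := by
      rintro k ⟨hk, hk'⟩
      rcases le_or_gt k (u i) with hki | hki
      · exact Or.inr hki
      · exact Or.inl ⟨⟨i, hki, hk, hk'⟩, by omega, hk⟩
    have hcard := (Set.ncard_le_ncard hsub (((Set.finite_Icc _ _).inter_of_right A).union
      (Set.finite_Iic _))).trans (Set.ncard_union_le _ _)
    rw [ncard_Iic_nat] at hcard
    rw [sub_le_iff_le_add, ← add_div]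
    refine (hu i).trans (div_le_div_of_nonneg_right ?_ (Nat.cast_nonneg _))
    unfold count
    exact_mod_cast hcard
  have hupper (i : ℕ) :
      count (π '' A) (u (i + 1)) / (u (i + 1) : ℕ) ≤ ((u i + 1 : ℕ) : ℝ) / (u (i + 1) : ℕ) := by
    have hsub : π '' A ∩ Set.Icc 1 (u (i + 1)) ⊆ π '' Set.Iic (u i) := by
      rintro _ ⟨⟨k, ⟨j, -, hk, hk'⟩, rfl⟩, -, hle⟩
      have hj : j + 1 < i + 1 := hmono.lt_iff_lt.1 (hk'.trans_le hle)
      exact ⟨k, hk.trans (hmono.monotone (by omega)), rfl⟩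
    have hcard := (Set.ncard_le_ncard hsub ((Set.finite_Iic _).image π)).trans
      (Set.ncard_image_le (Set.finite_Iic _))
    rw [ncard_Iic_nat] at hcard
    exact div_le_div_of_nonneg_right (Nat.cast_le.mpr hcard) (Nat.cast_nonneg _)
  have hhyper : (hyperfilter ℕ : Filter ℕ) ≤ atTop := Nat.hyperfilter_le_atTop
  let 𝒰 : Ultrafilter ℕ := (hyperfilter ℕ).map fun i => u (i + 1)
  have hlim (B : Set ℕ) : Tendsto (fun i => count B (u (i + 1)) / (u (i + 1) : ℕ))
      (hyperfilter ℕ) (𝓝 (ulim 𝒰 fun n => count B n / n)) :=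
    (tendsto_ulim_count_div 𝒰 B).comp (f := fun i => u (i + 1)) tendsto_map
  have hge := le_of_tendsto_of_tendsto' (tendsto_const_nhds.sub (hratio.mono_left hhyper))
    (hlim A) hlower
  have hle := le_of_tendsto_of_tendsto' (hlim (π '' A)) (hratio.mono_left hhyper) hupper
  have hinv := h _ (isDensityMeasure_ulim 𝒰 (hshift.mono_left hhyper)) A
  linarith
end

section
/- Let A, B ⊆ ℕ be such that A, B, ℕ∖A and ℕ∖B are all infinite. Then there exists a permutation π in the Lévy group 𝒢 with B = πA if and only if lim_{n→∞} (A(n) − B(n))/n = 0. -/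
open Filter Topology

section LevyGroup

open scoped Classical in
/-- The map sending the `i`-th element of `A` to the `i`-th element of `B`, and the `i`-th element
of the complement of `A` to the `i`-th element of the complement of `B`. -/
noncomputable def matchingFun (A B : Set ℕ) (k : ℕ) : ℕ :=
  if k ∈ A then Nat.nth (· ∈ B) (Nat.count (· ∈ A) k)
  else Nat.nth (· ∈ Bᶜ) (Nat.count (· ∈ Aᶜ) k)

open scoped Classical in
theorem matchingFun_of_mem {A : Set ℕ} (B : Set ℕ) {k : ℕ} (hk : k ∈ A) :
    matchingFun A B k = Nat.nth (· ∈ B) (Nat.count (· ∈ A) k) := if_pos hk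

open scoped Classical in
theorem matchingFun_of_notMem {A : Set ℕ} (B : Set ℕ) {k : ℕ} (hk : k ∉ A) :
    matchingFun A B k = Nat.nth (· ∈ Bᶜ) (Nat.count (· ∈ Aᶜ) k) := if_neg hk

theorem matchingFun_mem_iff {A B : Set ℕ} (hB : B.Infinite) (hBc : Bᶜ.Infinite) (k : ℕ) :
    matchingFun A B k ∈ B ↔ k ∈ A := by
  by_cases hk : k ∈ A
  · rw [matchingFun_of_mem B hk]
    exact iff_of_true (Nat.nth_mem_of_infinite hB _) hk
  · rw [matchingFun_of_notMem B hk]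
    exact iff_of_false (Nat.nth_mem_of_infinite hBc _) hk

theorem matchingFun_matchingFun {A B : Set ℕ} (hB : B.Infinite) (hBc : Bᶜ.Infinite) (k : ℕ) :
    matchingFun B A (matchingFun A B k) = k := by
  classical
  have hmem := matchingFun_mem_iff (A := A) hB hBc k
  by_cases hk : k ∈ A
  · rw [matchingFun_of_mem A (hmem.2 hk), matchingFun_of_mem B hk,
      Nat.count_nth_of_infinite (p := (· ∈ B)) hB]
    exact Nat.nth_count hk
  · rw [matchingFun_of_notMem A (mt hmem.1 hk), matchingFun_of_notMem B hk,
      Nat.count_nth_of_infinite (p := (· ∈ Bᶜ)) hBc]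
    exact Nat.nth_count (p := (· ∈ Aᶜ)) hk

/-- The permutation of `ℕ` matching `A` with `B` and `Aᶜ` with `Bᶜ` in increasing order. -/
noncomputable def matchingPerm {A B : Set ℕ} (hA : A.Infinite) (hB : B.Infinite)
    (hAc : Aᶜ.Infinite) (hBc : Bᶜ.Infinite) : Equiv.Perm ℕ where
  toFun := matchingFun A B
  invFun := matchingFun B A
  left_inv := matchingFun_matchingFun hB hBc
  right_inv := matchingFun_matchingFun hA hAc

theorem image_matchingPerm {A B : Set ℕ} (hA : A.Infinite) (hB : B.Infinite)
    (hAc : Aᶜ.Infinite) (hBc : Bᶜ.Infinite) : matchingPerm hA hB hAc hBc '' A = B := by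
  ext b
  rw [Equiv.image_eq_preimage_symm]
  exact matchingFun_mem_iff hA hAc b

theorem finite_crossing (f : ℕ → ℕ) (n : ℕ) : {k : ℕ | k ≤ n ∧ n < f k}.Finite :=
  (Set.finite_Iic n).subset fun _ hk => hk.1

/-- Bound for the number of elements of `A` that are at most `n` and whose match in `B` exceeds `n`. -/
theorem ncard_crossing_nth_le (A B : Set ℕ) [DecidablePred (· ∈ A)] [DecidablePred (· ∈ B)]
    (n : ℕ) :
    {k : ℕ | k ∈ A ∧ k ≤ n ∧ n < Nat.nth (· ∈ B) (Nat.count (· ∈ A) k)}.ncard ≤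
      Nat.count (· ∈ A) (n + 1) - Nat.count (· ∈ B) (n + 1) := by
  rw [← Nat.card_Ico, ← Set.ncard_coe_finset]
  refine Set.ncard_le_ncard_of_injOn (Nat.count (· ∈ A)) ?_ ?_ (Finset.finite_toSet _)
  · rintro k ⟨hkA, hkn, hlt⟩
    rw [Finset.coe_Ico]
    exact ⟨Nat.le_nth_of_count_le hlt,
      Nat.count_strict_mono hkA (Nat.lt_succ_of_le hkn)⟩
  · rintro k ⟨hk, -⟩ l ⟨hl, -⟩ h
    exact Nat.count_injective hk hl h

theorem count_add_count_compl (A : Set ℕ) [DecidablePred (· ∈ A)] (n : ℕ) :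
    Nat.count (· ∈ A) n + Nat.count (· ∈ Aᶜ) n = n := by
  induction n with
  | zero => simp
  | succ n ih =>
    rw [Nat.count_succ, Nat.count_succ]
    by_cases h : n ∈ A <;> simp [h] at ih ⊢ <;> omega

open scoped Classical in
theorem ncard_crossing_matchingPerm_le {A B : Set ℕ} (hA : A.Infinite) (hB : B.Infinite)
    (hAc : Aᶜ.Infinite) (hBc : Bᶜ.Infinite) (n : ℕ) :
    ({k : ℕ | k ≤ n ∧ n < matchingPerm hA hB hAc hBc k}.ncard : ℝ) ≤
      |(Nat.count (· ∈ A) (n + 1) : ℝ) - Nat.count (· ∈ B) (n + 1)| := by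
  have hsub : {k : ℕ | k ≤ n ∧ n < matchingPerm hA hB hAc hBc k} ⊆
      {k : ℕ | k ∈ A ∧ k ≤ n ∧ n < Nat.nth (· ∈ B) (Nat.count (· ∈ A) k)} ∪
      {k : ℕ | k ∈ Aᶜ ∧ k ≤ n ∧ n < Nat.nth (· ∈ Bᶜ) (Nat.count (· ∈ Aᶜ) k)} := by
    rintro k ⟨hkn, hlt⟩
    change n < matchingFun A B k at hlt
    by_cases hk : k ∈ A
    · exact Or.inl ⟨hk, hkn, matchingFun_of_mem B hk ▸ hlt⟩
    · exact Or.inr ⟨hk, hkn, matchingFun_of_notMem B hk ▸ hlt⟩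
  have hle := (Set.ncard_le_ncard hsub (((Set.finite_Iic n).subset fun _ hk => hk.2.1).union
    ((Set.finite_Iic n).subset fun _ hk => hk.2.1))).trans (Set.ncard_union_le _ _)
  have hA' := ncard_crossing_nth_le A B n
  have hAc' := ncard_crossing_nth_le Aᶜ Bᶜ n
  have h₁ := count_add_count_compl A (n + 1)
  have h₂ := count_add_count_compl B (n + 1)
  rcases le_total (Nat.count (· ∈ A) (n + 1)) (Nat.count (· ∈ B) (n + 1)) with h | h
  · rw [abs_sub_comm, ← Nat.cast_sub h]
    exact (Nat.cast_le.2 (by omega)).trans (le_abs_self _)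
  · rw [← Nat.cast_sub h]
    exact (Nat.cast_le.2 (by omega)).trans (le_abs_self _)

theorem count_le_count_add_ncard_crossing {π : Equiv.Perm ℕ} {A B : Set ℕ}
    [DecidablePred (· ∈ A)] [DecidablePred (· ∈ B)] (hAB : Set.MapsTo π A B) (n : ℕ) :
    Nat.count (· ∈ A) (n + 1) ≤
      Nat.count (· ∈ B) (n + 1) + {k : ℕ | k ≤ n ∧ n < π k}.ncard := by
  have hfin := finite_crossing π n
  rw [Nat.count_eq_card_filter_range, Nat.count_eq_card_filter_range,
    Set.ncard_eq_toFinset_card _ hfin,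
    ← Finset.card_image_of_injective {x ∈ Finset.range (n + 1) | x ∈ A} π.injective,
    ← Finset.card_image_of_injective hfin.toFinset π.injective]
  refine (Finset.card_le_card fun b hb => ?_).trans (Finset.card_union_le _ _)
  obtain ⟨k, hk, rfl⟩ := Finset.mem_image.1 hb
  obtain ⟨hkn, hkA⟩ := Finset.mem_filter.1 hk
  rw [Finset.mem_range] at hkn
  by_cases h : π k ≤ n
  · exact Finset.mem_union_left _ (Finset.mem_filter.2
      ⟨Finset.mem_range.2 (by omega), hAB hkA⟩)
  · exact Finset.mem_union_right _ (Finset.mem_image_of_mem π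
      (hfin.mem_toFinset.2 ⟨by omega, by omega⟩))

open scoped Classical in
theorem abs_count_sub_count_image_le (π : Equiv.Perm ℕ) (A : Set ℕ) (n : ℕ) :
    |(Nat.count (· ∈ A) (n + 1) : ℝ) - Nat.count (· ∈ π '' A) (n + 1)| ≤
      ({k : ℕ | k ≤ n ∧ n < π k}.ncard : ℝ) := by
  have hA := count_le_count_add_ncard_crossing (Set.mapsTo_image π A) n
  have hAc := count_le_count_add_ncard_crossing (A := Aᶜ) (B := (π '' A)ᶜ)
    (Set.image_compl_eq π.bijective ▸ Set.mapsTo_image π Aᶜ) n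
  have h₁ := count_add_count_compl A (n + 1)
  have h₂ := count_add_count_compl (π '' A) (n + 1)
  have hAc' : Nat.count (· ∈ π '' A) (n + 1) ≤
      Nat.count (· ∈ A) (n + 1) + {k : ℕ | k ≤ n ∧ n < π k}.ncard := by omega
  have hA_real : (Nat.count (· ∈ A) (n + 1) : ℝ) ≤
      Nat.count (· ∈ π '' A) (n + 1) + {k : ℕ | k ≤ n ∧ n < π k}.ncard := mod_cast hA
  have hAc_real : (Nat.count (· ∈ π '' A) (n + 1) : ℝ) ≤
      Nat.count (· ∈ A) (n + 1) + {k : ℕ | k ≤ n ∧ n < π k}.ncard := mod_cast hAc'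
  exact abs_sub_le_iff.2 ⟨by linarith, by linarith⟩

open scoped Classical in
theorem natCount_succ_eq_count_add (A : Set ℕ) (n : ℕ) :
    (Nat.count (· ∈ A) (n + 1) : ℝ) = count A n + if 0 ∈ A then 1 else 0 := by
  induction n with
  | zero => simp [count, Nat.count_succ]
  | succ n ih =>
    rw [Nat.count_succ, Nat.cast_add, ih]
    by_cases h : n + 1 ∈ A
    · have hset : A ∩ Set.Icc 1 (n + 1) = insert (n + 1) (A ∩ Set.Icc 1 n) := by
        ext x
        simp only [Set.mem_inter_iff, Set.mem_Icc, Set.mem_insert_iff]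
        grind
      have hcard : (A ∩ Set.Icc 1 (n + 1)).ncard = (A ∩ Set.Icc 1 n).ncard + 1 := by
        rw [hset, Set.ncard_insert_of_notMem (by simp)
          ((Set.finite_Icc 1 n).subset Set.inter_subset_right)]
      simp only [count, hcard, h, if_true, Nat.cast_add, Nat.cast_one]
      ring
    · have hset : A ∩ Set.Icc 1 (n + 1) = A ∩ Set.Icc 1 n := by
        ext x
        simp only [Set.mem_inter_iff, Set.mem_Icc]
        grind
      simp [count, hset, h]

open scoped Classical in
theorem tendsto_count_sub_div_iff (A B : Set ℕ) :
    Tendsto (fun n : ℕ => (count A n - count B n) / n) atTop (𝓝 0) ↔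
      Tendsto (fun n : ℕ =>
        |(Nat.count (· ∈ A) (n + 1) : ℝ) - Nat.count (· ∈ B) (n + 1)| / n) atTop (𝓝 0) := by
  have habs : (fun n : ℕ =>
      |(Nat.count (· ∈ A) (n + 1) : ℝ) - Nat.count (· ∈ B) (n + 1)| / n) = fun n : ℕ =>
      |((Nat.count (· ∈ A) (n + 1) : ℝ) - Nat.count (· ∈ B) (n + 1)) / n| := by
    ext n
    rw [abs_div, Nat.abs_cast]
  rw [habs]
  refine Iff.trans ?_ (tendsto_zero_iff_abs_tendsto_zero _)
  have hconst := tendsto_const_div_atTop_nhds_zero_nat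
    ((if 0 ∈ A then 1 else 0 : ℝ) - if 0 ∈ B then 1 else 0)
  constructor <;> intro h
  · refine (add_zero (0 : ℝ) ▸ h.add hconst).congr fun n => ?_
    rw [natCount_succ_eq_count_add, natCount_succ_eq_count_add]
    ring
  · refine (sub_zero (0 : ℝ) ▸ h.sub hconst).congr fun n => ?_
    rw [natCount_succ_eq_count_add, natCount_succ_eq_count_add]
    ring

end LevyGroup

/-- Blümlinger's lemma: if `A`, `B`, `ℕ∖A`, `ℕ∖B` are all infinite, then there
is a Lévy-group permutation `π` with `B = πA` iff `(A(n) − B(n))/n → 0`. -/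
theorem exists_levyGroup_perm_iff_count_diff_tendsto_zero (A B : Set ℕ)
    (hA : A.Infinite) (hB : B.Infinite) (hAc : Aᶜ.Infinite) (hBc : Bᶜ.Infinite) :
    (∃ π : Equiv.Perm ℕ, InLevyGroup π ∧ B = π '' A) ↔
      Filter.Tendsto (fun n : ℕ => (count A n - count B n) / n)
        Filter.atTop (nhds 0) := by
  classical
  rw [tendsto_count_sub_div_iff]
  constructor
  · rintro ⟨π, hπ, rfl⟩
    exact squeeze_zero (fun n => by positivity)
      (fun n => div_le_div_of_nonneg_right (abs_count_sub_count_image_le π A n)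
        n.cast_nonneg) hπ
  · intro h
    exact ⟨matchingPerm hA hB hAc hBc, squeeze_zero (fun n => by positivity)
      (fun n => div_le_div_of_nonneg_right (ncard_crossing_matchingPerm_le hA hB hAc hBc n)
        n.cast_nonneg) h, (image_matchingPerm hA hB hAc hBc).symm⟩
end
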